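/- arXiv:1009.0508 — 2 statements merged into one kernel-verified Lean document; each statement's English description precedes it below -/
import Mathlib

section
/- Let A be a positive operator and B a self-adjoint operator on a Hilbert space. Then ‖[A^{1/2}, B]‖ ≤ (5/4) ‖B‖^{1/2} ‖[A, B]‖^{1/2}. -/
/-!
Write `D = ‖[S², B]‖`. On `[0, ∞)` split `s = √(s² + 1) - (8/5) (s² + 4)⁻¹ - g(s)` and bound the
three resulting commutators with `B` separately:

* `Q = √(S² + 1) ≥ 1` and `T = [Q, B]` satisfy `Q T + T Q = [S², B]`. The left side differs from
  `2m T`, where `m = ‖Q‖`, by at most `2 ‖Q - m‖ ‖T‖ ≤ 2 (m - 1) ‖T‖`, so `‖T‖ ≤ D / 2`.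
* `R = (S² + 4)⁻¹` satisfies `‖R‖ ≤ 1/4` and `[R, B] = -R [S², B] R`, so `‖[R, B]‖ ≤ D / 16`.
* `0 ≤ g ≤ 3/5` on `[0, ∞)`, so `‖g(S) - 3/10‖ ≤ 3/10` and `‖[g(S), B]‖ ≤ (3/5) ‖B‖`.

The numbers `8/5` and `4` are chosen so that `1/2 + (8/5)/16` and the bound on `g` are both `3/5`.
Altogether `‖[S, B]‖ ≤ (3/5) (D + ‖B‖)`, and optimizing over the scalings `S ↦ cS`, `c > 0`, yields
the constant `6/5 < 5/4`.
-/

section Real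

theorem inv_sq_add_four_le_sqrt_sub_self (s : ℝ) :
    8 / 5 * (s ^ 2 + 4)⁻¹ ≤ √(s ^ 2 + 1) - s := by
  set w := √(s ^ 2 + 1)
  have hw : w ^ 2 = s ^ 2 + 1 := Real.sq_sqrt (by positivity)
  have hsw : s ≤ w := Real.le_sqrt_of_sq_le (by linarith)
  have hsum : 8 / 5 * (w + s) ≤ s ^ 2 + 4 := by
    linarith [sq_nonneg (w - 8 / 5), sq_nonneg (s - 8 / 5)]
  rw [← div_eq_mul_inv, div_le_iff₀ (by positivity)]
  calc 8 / 5 = (w - s) * (8 / 5 * (w + s)) := by linear_combination -(8 / 5) * hw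
    _ ≤ (w - s) * (s ^ 2 + 4) := mul_le_mul_of_nonneg_left hsum (sub_nonneg.2 hsw)

theorem sqrt_sub_self_le_inv_sq_add_four {s : ℝ} (hs : 0 ≤ s) :
    √(s ^ 2 + 1) - s ≤ 8 / 5 * (s ^ 2 + 4)⁻¹ + 3 / 5 := by
  rcases le_total s 1 with hs1 | hs1
  · -- `2/5 - s/10` is the tangent of `(8/5) (s² + 4)⁻¹` at `s = 2`.
    have htangent : 2 / 5 - s / 10 ≤ 8 / 5 * (s ^ 2 + 4)⁻¹ := by
      rw [← div_eq_mul_inv, le_div_iff₀ (by positivity)]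
      linarith [mul_nonneg hs (sq_nonneg (s - 2))]
    have hsqrt : √(s ^ 2 + 1) ≤ 1 + 9 / 10 * s :=
      Real.sqrt_le_iff.2 ⟨by positivity, by nlinarith⟩
    linarith
  · have hinv : 0 ≤ (s ^ 2 + 4)⁻¹ := by positivity
    have hsqrt : √(s ^ 2 + 1) ≤ s + 3 / 5 := Real.sqrt_le_iff.2 ⟨by positivity, by nlinarith⟩
    linarith

theorem le_two_mul_sqrt_mul_sqrt_of_forall_pos {t b d : ℝ} (hb : 0 ≤ b) (hd : 0 ≤ d)
    (h : ∀ c : ℝ, 0 < c → c * t ≤ c ^ 2 * d + b) : t ≤ 2 * √b * √d := by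
  rcases le_total t 0 with ht | ht
  · exact ht.trans (by positivity)
  have hquad : ∀ c : ℝ, 0 ≤ d * (c * c) + -t * c + b := by
    intro c
    rcases le_or_gt c 0 with hc | hc
    · linarith [mul_nonneg hd (mul_self_nonneg c), mul_nonneg ht (neg_nonneg.2 hc)]
    · linarith [h c hc]
  have hdiscrim : (-t) ^ 2 - 4 * d * b ≤ 0 := discrim_le_zero hquad
  refine le_of_sq_le_sq ?_ (by positivity)
  rw [mul_pow, mul_pow, Real.sq_sqrt hb, Real.sq_sqrt hd]
  linarith

end Real

section Ring

theorem mul_lie_add_lie_mul {A : Type*} [NonUnitalRing A] (q b : A) :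
    q * ⁅q, b⁆ + ⁅q, b⁆ * q = ⁅q * q, b⁆ := by
  simp only [Ring.lie_def]
  noncomm_ring

theorem lie_units_inv {A : Type*} [Ring A] (u : Aˣ) (b : A) :
    ⁅(↑u⁻¹ : A), b⁆ = -(↑u⁻¹ * ⁅(u : A), b⁆ * ↑u⁻¹) := by
  simp only [Ring.lie_def, mul_sub, sub_mul, Units.inv_mul_cancel_left, mul_assoc, Units.mul_inv,
    mul_one, neg_sub]

theorem add_algebraMap_lie {R A : Type*} [CommSemiring R] [Ring A] [Algebra R A] (a b : A) (r : R) :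
    ⁅a + algebraMap R A r, b⁆ = ⁅a, b⁆ := by
  rw [Ring.lie_def, Ring.lie_def, add_mul, mul_add, Algebra.commutes, add_sub_add_right_eq_sub]

end Ring

section SeminormedRing

theorem norm_lie_le {A : Type*} [NonUnitalSeminormedRing A] (x b : A) : ‖⁅x, b⁆‖ ≤ 2 * ‖x‖ * ‖b‖ :=
  calc ‖⁅x, b⁆‖ ≤ ‖x * b‖ + ‖b * x‖ := norm_sub_le _ _
    _ ≤ ‖x‖ * ‖b‖ + ‖b‖ * ‖x‖ := add_le_add (norm_mul_le _ _) (norm_mul_le _ _)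
    _ = 2 * ‖x‖ * ‖b‖ := by ring

theorem norm_lie_units_inv_le {A : Type*} [SeminormedRing A] (u : Aˣ) (b : A) :
    ‖⁅(↑u⁻¹ : A), b⁆‖ ≤ ‖(↑u⁻¹ : A)‖ ^ 2 * ‖⁅(u : A), b⁆‖ := by
  rw [lie_units_inv, norm_neg]
  calc ‖(↑u⁻¹ : A) * ⁅(u : A), b⁆ * ↑u⁻¹‖ ≤ ‖(↑u⁻¹ : A)‖ * ‖⁅(u : A), b⁆‖ * ‖(↑u⁻¹ : A)‖ :=
        norm_mul₃_le
    _ = ‖(↑u⁻¹ : A)‖ ^ 2 * ‖⁅(u : A), b⁆‖ := by ring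

theorem norm_smul_lie {𝕜 A : Type*} [NormedField 𝕜] [SeminormedRing A] [NormedAlgebra 𝕜 A] (k : 𝕜)
    (a b : A) : ‖⁅k • a, b⁆‖ = ‖k‖ * ‖⁅a, b⁆‖ := by
  rw [Ring.lie_def, smul_mul_assoc, mul_smul_comm, ← smul_sub, norm_smul, Ring.lie_def]

theorem two_mul_sub_mul_norm_le_norm_mul_add_mul {A : Type*} [SeminormedRing A]
    [NormedAlgebra ℝ A] (q t : A) (m : ℝ) :
    2 * (m - ‖q - algebraMap ℝ A m‖) * ‖t‖ ≤ ‖q * t + t * q‖ := by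
  set p := q - algebraMap ℝ A m
  have hsplit : (2 * m) • t = (q * t + t * q) - (p * t + t * p) := by
    simp only [p, sub_mul, mul_sub, ← Algebra.commutes m t, ← Algebra.smul_def]
    module
  have hp : ‖p * t + t * p‖ ≤ 2 * ‖p‖ * ‖t‖ :=
    calc ‖p * t + t * p‖ ≤ ‖p‖ * ‖t‖ + ‖t‖ * ‖p‖ :=
          norm_add_le_of_le (norm_mul_le _ _) (norm_mul_le _ _)
      _ = 2 * ‖p‖ * ‖t‖ := by ring
  have hm : 2 * m * ‖t‖ ≤ ‖(2 * m) • t‖ := by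
    rw [norm_smul]
    exact mul_le_mul_of_nonneg_right (Real.le_norm_self _) (norm_nonneg t)
  rw [hsplit] at hm
  linarith [norm_sub_le (q * t + t * q) (p * t + t * p)]

end SeminormedRing

section CStarAlgebra

variable {A : Type*} [CStarAlgebra A]

theorem norm_lie_cfc_inv_sq_add_le {s : A} (hs : IsSelfAdjoint s) (b : A) {r : ℝ} (hr : 0 < r) :
    ‖⁅cfc (fun x : ℝ ↦ (x ^ 2 + r)⁻¹) s, b⁆‖ ≤ r⁻¹ ^ 2 * ‖⁅s * s, b⁆‖ := by
  have hne : ∀ x ∈ spectrum ℝ s, x ^ 2 + r ≠ 0 := fun x _ ↦ by positivity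
  let u : Aˣ := cfcUnits (fun x : ℝ ↦ x ^ 2 + r) s hne
  have hu : (u : A) = s * s + algebraMap ℝ A r := by
    simp only [u, val_cfcUnits]
    rw [cfc_add_const r (fun x : ℝ ↦ x ^ 2) s, cfc_pow_id s 2, sq]
  have hinv : ‖(↑u⁻¹ : A)‖ ≤ r⁻¹ := by
    refine norm_cfc_le (by positivity) fun x _ ↦ ?_
    rw [Real.norm_of_nonneg (by positivity)]
    exact inv_anti₀ hr (by linarith [sq_nonneg x])
  calc ‖⁅(↑u⁻¹ : A), b⁆‖ ≤ ‖(↑u⁻¹ : A)‖ ^ 2 * ‖⁅(u : A), b⁆‖ := norm_lie_units_inv_le u b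
    _ = ‖(↑u⁻¹ : A)‖ ^ 2 * ‖⁅s * s, b⁆‖ := by rw [hu, add_algebraMap_lie]
    _ ≤ r⁻¹ ^ 2 * ‖⁅s * s, b⁆‖ := by gcongr

theorem norm_cfc_sub_algebraMap_midpoint_le {s : A} (hs : IsSelfAdjoint s) {f : ℝ → ℝ} {m M : ℝ}
    (hf : ContinuousOn f (spectrum ℝ s)) (hmM : m ≤ M)
    (hfm : ∀ x ∈ spectrum ℝ s, f x ∈ Set.Icc m M) :
    ‖cfc f s - algebraMap ℝ A ((m + M) / 2)‖ ≤ (M - m) / 2 := by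
  rw [← cfc_const ((m + M) / 2) s, ← cfc_sub f _ s]
  refine norm_cfc_le (by linarith) fun x hx ↦ ?_
  obtain ⟨hm, hM⟩ := hfm x hx
  rw [Real.norm_eq_abs, abs_le]
  constructor <;> linarith

theorem norm_lie_cfc_le_sub_mul_norm {s : A} (hs : IsSelfAdjoint s) (b : A) {f : ℝ → ℝ} {m M : ℝ}
    (hf : ContinuousOn f (spectrum ℝ s)) (hmM : m ≤ M)
    (hfm : ∀ x ∈ spectrum ℝ s, f x ∈ Set.Icc m M) :
    ‖⁅cfc f s, b⁆‖ ≤ (M - m) * ‖b‖ := by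
  set p := cfc f s - algebraMap ℝ A ((m + M) / 2)
  have hp : ‖p‖ ≤ (M - m) / 2 := norm_cfc_sub_algebraMap_midpoint_le hs hf hmM hfm
  calc ‖⁅cfc f s, b⁆‖ = ‖⁅p, b⁆‖ := by
        rw [← add_algebraMap_lie p b ((m + M) / 2), sub_add_cancel]
    _ ≤ 2 * ‖p‖ * ‖b‖ := norm_lie_le p b
    _ ≤ 2 * ((M - m) / 2) * ‖b‖ := by gcongr
    _ = (M - m) * ‖b‖ := by ring

variable [PartialOrder A] [StarOrderedRing A]

theorem exists_norm_sub_algebraMap_le_sub {q : A} {c : ℝ} (hc : algebraMap ℝ A c ≤ q) :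
    ∃ m : ℝ, ‖q - algebraMap ℝ A m‖ ≤ m - c := by
  have hq : IsSelfAdjoint q := (IsSelfAdjoint.algebraMap A (.all c)).of_ge hc
  refine ⟨max c ‖q‖, ?_⟩
  have hle : q ≤ algebraMap ℝ A (max c ‖q‖) :=
    hq.le_algebraMap_norm_self.trans (algebraMap_mono A (le_max_right c ‖q‖))
  rw [norm_sub_rev, CStarAlgebra.norm_le_iff_le_algebraMap _ (sub_nonneg.2 (le_max_left c ‖q‖))
    (sub_nonneg.2 hle), map_sub]
  exact sub_le_sub_left hc _

theorem two_mul_mul_norm_le_norm_mul_add_mul {q : A} {c : ℝ} (hc : algebraMap ℝ A c ≤ q) (t : A) :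
    2 * c * ‖t‖ ≤ ‖q * t + t * q‖ := by
  obtain ⟨m, hm⟩ := exists_norm_sub_algebraMap_le_sub hc
  calc 2 * c * ‖t‖ ≤ 2 * (m - ‖q - algebraMap ℝ A m‖) * ‖t‖ := by gcongr; linarith
    _ ≤ ‖q * t + t * q‖ := two_mul_sub_mul_norm_le_norm_mul_add_mul q t m

theorem norm_lie_cfc_sqrt_sq_add_le {s : A} (hs : IsSelfAdjoint s) (b : A) {r : ℝ} (hr : 0 ≤ r) :
    2 * √r * ‖⁅cfc (fun x : ℝ ↦ √(x ^ 2 + r)) s, b⁆‖ ≤ ‖⁅s * s, b⁆‖ := by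
  have hsq : cfc (fun x : ℝ ↦ √(x ^ 2 + r)) s * cfc (fun x : ℝ ↦ √(x ^ 2 + r)) s
      = s * s + algebraMap ℝ A r := by
    rw [← cfc_mul _ _ s, ← sq, ← cfc_pow_id (R := ℝ) s 2, ← cfc_add_const r (fun x : ℝ ↦ x ^ 2) s]
    exact cfc_congr fun x _ ↦ Real.mul_self_sqrt (by positivity)
  have hle : algebraMap ℝ A √r ≤ cfc (fun x : ℝ ↦ √(x ^ 2 + r)) s :=
    algebraMap_le_cfc _ _ s fun x _ ↦ Real.sqrt_le_sqrt (by linarith [sq_nonneg x])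
  rw [← add_algebraMap_lie (s * s) b r, ← hsq, ← mul_lie_add_lie_mul]
  exact two_mul_mul_norm_le_norm_mul_add_mul hle _

theorem norm_lie_le_norm_mul_self_lie_add_norm {s : A} (hs : 0 ≤ s) (b : A) :
    ‖⁅s, b⁆‖ ≤ 3 / 5 * (‖⁅s * s, b⁆‖ + ‖b‖) := by
  have hsa : IsSelfAdjoint s := hs.isSelfAdjoint
  have hinv₀ : ContinuousOn (fun x : ℝ ↦ (x ^ 2 + 4)⁻¹) (spectrum ℝ s) :=
    ContinuousOn.inv₀ (by fun_prop) fun x _ ↦ by positivity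
  have hinv : ContinuousOn (fun x : ℝ ↦ 8 / 5 * (x ^ 2 + 4)⁻¹) (spectrum ℝ s) :=
    continuousOn_const.mul hinv₀
  let g : ℝ → ℝ := fun x ↦ √(x ^ 2 + 1) - x - 8 / 5 * (x ^ 2 + 4)⁻¹
  set q := cfc (fun x : ℝ ↦ √(x ^ 2 + 1)) s
  set r := cfc (fun x : ℝ ↦ (x ^ 2 + 4)⁻¹) s
  have hsplit : cfc g s = q - s - (8 / 5 : ℝ) • r := by
    rw [cfc_sub _ _ s (hg := hinv), cfc_sub _ _ s, cfc_id' ℝ s, cfc_const_mul _ _ s hinv₀]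
  have hq : 2 * ‖⁅q, b⁆‖ ≤ ‖⁅s * s, b⁆‖ := by
    simpa using norm_lie_cfc_sqrt_sq_add_le hsa b zero_le_one
  have hr : ‖⁅r, b⁆‖ ≤ 4⁻¹ ^ 2 * ‖⁅s * s, b⁆‖ := norm_lie_cfc_inv_sq_add_le hsa b four_pos
  have hg : ‖⁅cfc g s, b⁆‖ ≤ 3 / 5 * ‖b‖ := by
    have hg_mem : ∀ x ∈ spectrum ℝ s, g x ∈ Set.Icc 0 (3 / 5) := fun x hx ↦
      ⟨sub_nonneg.2 (inv_sq_add_four_le_sqrt_sub_self x), sub_le_iff_le_add'.2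
        (sqrt_sub_self_le_inv_sq_add_four (spectrum_nonneg_of_nonneg hs hx))⟩
    simpa only [sub_zero] using
      norm_lie_cfc_le_sub_mul_norm hsa b (.fun_sub (by fun_prop) hinv) (by norm_num) hg_mem
  have hlie : ⁅s, b⁆ = ⁅q, b⁆ - ⁅cfc g s, b⁆ - ⁅(8 / 5 : ℝ) • r, b⁆ := by
    rw [hsplit]
    simp only [Ring.lie_def, sub_mul, mul_sub]
    abel
  calc ‖⁅s, b⁆‖ ≤ ‖⁅q, b⁆‖ + ‖⁅cfc g s, b⁆‖ + ‖⁅(8 / 5 : ℝ) • r, b⁆‖ := by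
        rw [hlie]
        exact norm_sub_le_of_le (norm_sub_le _ _) le_rfl
    _ = ‖⁅q, b⁆‖ + ‖⁅cfc g s, b⁆‖ + 8 / 5 * ‖⁅r, b⁆‖ := by
        rw [norm_smul_lie, Real.norm_of_nonneg (by norm_num)]
    _ ≤ 3 / 5 * (‖⁅s * s, b⁆‖ + ‖b‖) := by linarith

theorem commutator_sqrt_inequality_general {s : A} (hs : 0 ≤ s) (b : A) :
    ‖⁅s, b⁆‖ ≤ 6 / 5 * √‖b‖ * √‖⁅s * s, b⁆‖ := by
  have hscaled : ∀ c : ℝ, 0 < c → c * (5 / 3 * ‖⁅s, b⁆‖) ≤ c ^ 2 * ‖⁅s * s, b⁆‖ + ‖b‖ := by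
    intro c hc
    have h := norm_lie_le_norm_mul_self_lie_add_norm (smul_nonneg hc.le hs) b
    rw [smul_mul_smul_comm, norm_smul_lie, norm_smul_lie, Real.norm_of_nonneg hc.le,
      Real.norm_of_nonneg (mul_self_nonneg c), ← sq] at h
    linarith
  linarith [le_two_mul_sqrt_mul_sqrt_of_forall_pos (norm_nonneg _) (norm_nonneg _) hscaled]

end CStarAlgebra

/-- Pedersen's commutator inequality: if `A` is a positive operator and `B` a self-adjoint
operator on a Hilbert space, then `‖[A^{1/2}, B]‖ ≤ (5/4) ‖B‖^{1/2} ‖[A, B]‖^{1/2}`.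
Here the positive square root `A^{1/2}` is represented by any positive operator `S` with
`S * S = A`. -/
theorem commutator_sqrt_inequality {H : Type*} [NormedAddCommGroup H]
    [InnerProductSpace ℂ H] [CompleteSpace H] (A B : H →L[ℂ] H)
    (hA : A.IsPositive) (hB : IsSelfAdjoint B)
    (S : H →L[ℂ] H) (hS : S.IsPositive) (hSA : S * S = A) :
    ‖S * B - B * S‖ ≤ (5 / 4 : ℝ) * Real.sqrt ‖B‖ * Real.sqrt ‖A * B - B * A‖ := by
  subst hSA
  exact (commutator_sqrt_inequality_general ((S.nonneg_iff_isPositive).2 hS) B).trans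
    (by rw [Ring.lie_def]; gcongr ?_ * _ * _; norm_num)
end

section
/- Let T be a positive block-diagonal band-limited operator and V a 1-raising band-limited operator on H = ⊕ H_n. If Σ_{n=0}^∞ ‖[T,V]|_{H_n}‖^{1/2} < ∞, then the commutator [T^{1/2}, V] is a summable 1-raising operator; in particular, for each n, ‖T_{n+1}^{1/2} V_n − V_n T_n^{1/2}‖ ≤ (5/4) ‖V‖^{1/2} ‖T_{n+1} V_n − V_n T_n‖^{1/2}, where T_n = T|_{H_n} and V_n = V|_{H_n}. -/
open scoped ComplexOrder

variable {H : Type*} [NormedAddCommGroup H] [InnerProductSpace ℂ H] [CompleteSpace H]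

/-- `T` is band-limited (with respect to the orthogonal decomposition `H = ⊕ₙ Hₙ` given by the
projections `P n`): there is a band limit `b` with `T(Hₙ) ⊆ ⊕_{|m-n| ≤ b} Hₘ` for all `n`. -/
def BandLimited (P : ℕ → H →L[ℂ] H) (T : H →L[ℂ] H) : Prop :=
  ∃ b : ℕ, ∀ m n : ℕ, (n + b < m ∨ m + b < n) → (P m).comp (T.comp (P n)) = 0

/-- `T` is summable: `Σₙ ‖T|_{Hₙ}‖ < ∞`. -/
def SummableRestrictions (P : ℕ → H →L[ℂ] H) (T : H →L[ℂ] H) : Prop :=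
  Summable fun n => ‖T.comp (P n)‖

/-- `T` is a summable band-limited operator. -/
def SBL (P : ℕ → H →L[ℂ] H) (T : H →L[ℂ] H) : Prop :=
  BandLimited P T ∧ SummableRestrictions P T


/-!
The commutator inequality behind the theorem is `‖[a, b]‖² ≤ (3/2) ‖b‖ ‖[a², b]‖` for `0 ≤ a` in a
C⋆-algebra. Fix `τ > 0` and put `r = √(a² + τ²)`. As `r ≥ τ`, the identity
`r [r, b] + [r, b] r = [a², b]` yields `2τ ‖[r, b]‖ ≤ ‖[a², b]‖`, and `[r⁻¹, b] = -r⁻¹ [r, b] r⁻¹`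
controls the commutator with `r⁻¹`. The element `r - (τ²/2) r⁻¹` differs from `a` by an element with
spectrum in `[0, τ/2]`, whose commutator with `b` has norm at most `(τ/2) ‖b‖`. Altogether
`‖[a, b]‖ ≤ (3/4) ‖[a², b]‖ / τ + (1/2) ‖b‖ τ`, and one optimizes over `τ`. The theorem follows by
taking `a = T^{1/2}` and `b = V Pₙ`, because `T^{1/2}` commutes with the projection `Pₙ` onto `Hₙ`.
-/

section Ring

variable {R : Type*} [Ring R]

lemma mul_lie_self_add_lie_self_mul (a b : R) : a * ⁅a, b⁆ + ⁅a, b⁆ * a = ⁅a ^ 2, b⁆ := by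
  simp only [Ring.lie_def, sq]
  noncomm_ring

lemma lie_eq_neg_mul_lie_mul_of_mul_eq_one {a c : R} (hac : a * c = 1) (hca : c * a = 1) (b : R) :
    ⁅c, b⁆ = -(c * ⁅a, b⁆ * c) := by
  calc ⁅c, b⁆ = c * b * (a * c) - (c * a) * b * c := by rw [hac, hca, Ring.lie_def]; simp
    _ = -(c * ⁅a, b⁆ * c) := by rw [Ring.lie_def]; noncomm_ring

lemma lie_mul_of_commute {a p : R} (h : Commute a p) (b : R) : ⁅a, b * p⁆ = ⁅a, b⁆ * p := by
  rw [Ring.lie_def, Ring.lie_def, sub_mul, mul_assoc b p, ← h.eq]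
  simp only [mul_assoc]

lemma mul_lie_mul_eq_zero {a b p q : R} (hp : Commute a p) (hq : Commute a q)
    (h : q * (b * p) = 0) : q * (⁅a, b⁆ * p) = 0 := by
  rw [← lie_mul_of_commute hp, Ring.lie_def, mul_sub, ← mul_assoc q a, ← hq.eq, mul_assoc a, h,
    ← mul_assoc q, h, mul_zero, zero_mul, sub_zero]

end Ring

section NormedAlgebra

variable {A : Type*} [NormedRing A] [NormedAlgebra ℝ A]

lemma norm_lie_le_two_mul_norm_sub_algebraMap_mul (a b : A) (c : ℝ) :
    ‖⁅a, b⁆‖ ≤ 2 * ‖a - algebraMap ℝ A c‖ * ‖b‖ := by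
  set d := a - algebraMap ℝ A c with hd
  have hlie : ⁅a, b⁆ = d * b - b * d := by
    rw [hd, Ring.lie_def, sub_mul, mul_sub, Algebra.commutes]
    abel
  calc ‖⁅a, b⁆‖ ≤ ‖d * b‖ + ‖b * d‖ := hlie ▸ norm_sub_le _ _
    _ ≤ ‖d‖ * ‖b‖ + ‖b‖ * ‖d‖ := add_le_add (norm_mul_le _ _) (norm_mul_le _ _)
    _ = 2 * ‖d‖ * ‖b‖ := by ring

lemma two_mul_mul_norm_le_of_norm_algebraMap_sub_le {a : A} {c m : ℝ}
    (h : ‖algebraMap ℝ A c - a‖ ≤ c - m) (x : A) : 2 * m * ‖x‖ ≤ ‖a * x + x * a‖ := by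
  set d := algebraMap ℝ A c - a with hd
  have hsplit : (2 * c) • x = (a * x + x * a) + (d * x + x * d) := by
    rw [hd, sub_mul, mul_sub, ← Algebra.commutes, ← Algebra.smul_def, two_mul, add_smul]
    abel
  have hx : 2 * c * ‖x‖ ≤ ‖a * x + x * a‖ + 2 * (c - m) * ‖x‖ :=
    calc 2 * c * ‖x‖ ≤ ‖(2 * c) • x‖ := by
          rw [norm_smul]
          gcongr
          exact Real.le_norm_self _
      _ ≤ ‖a * x + x * a‖ + (‖d * x‖ + ‖x * d‖) :=
          hsplit ▸ (norm_add_le _ _).trans (by gcongr; exact norm_add_le _ _)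
      _ ≤ ‖a * x + x * a‖ + (‖d‖ * ‖x‖ + ‖x‖ * ‖d‖) := by gcongr <;> exact norm_mul_le _ _
      _ = ‖a * x + x * a‖ + 2 * ‖d‖ * ‖x‖ := by ring
      _ ≤ ‖a * x + x * a‖ + 2 * (c - m) * ‖x‖ := by gcongr
  linarith

end NormedAlgebra

section Real

/-- The smoothing `√(s² + τ²)` of the absolute value of `s` at scale `τ`. It is at least `τ` and its
square differs from `s²` by a constant, so that applied to `a` by the functional calculus its
commutators are controlled by those of `a²`. -/
noncomputable def smoothAbs (τ s : ℝ) : ℝ := √(s ^ 2 + τ ^ 2)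

@[fun_prop]
lemma continuous_smoothAbs (τ : ℝ) : Continuous (smoothAbs τ) := by
  unfold smoothAbs
  fun_prop

lemma smoothAbs_sq (τ s : ℝ) : smoothAbs τ s ^ 2 = s ^ 2 + τ ^ 2 :=
  Real.sq_sqrt (by positivity)

lemma le_smoothAbs_left (τ s : ℝ) : τ ≤ smoothAbs τ s :=
  Real.le_sqrt_of_sq_le (le_add_of_nonneg_left (sq_nonneg s))

lemma smoothAbs_pos {τ : ℝ} (hτ : 0 < τ) (s : ℝ) : 0 < smoothAbs τ s :=
  hτ.trans_le (le_smoothAbs_left τ s)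

lemma continuous_smoothAbs_inv {τ : ℝ} (hτ : 0 < τ) : Continuous fun s => (smoothAbs τ s)⁻¹ :=
  (continuous_smoothAbs τ).inv₀ fun s => (smoothAbs_pos hτ s).ne'

lemma le_smoothAbs_right (τ s : ℝ) : s ≤ smoothAbs τ s :=
  Real.le_sqrt_of_sq_le (le_add_of_nonneg_right (sq_nonneg τ))

lemma smoothAbs_le_add {τ s : ℝ} (hτ : 0 ≤ τ) (hs : 0 ≤ s) : smoothAbs τ s ≤ s + τ :=
  Real.sqrt_le_iff.2 ⟨add_nonneg hs hτ, by nlinarith [mul_nonneg hs hτ]⟩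

lemma smoothAbs_sub_mul_inv_sub {τ : ℝ} (hτ : 0 < τ) (s : ℝ) :
    smoothAbs τ s - τ ^ 2 / 2 * (smoothAbs τ s)⁻¹ - s =
      (smoothAbs τ s - s) ^ 2 / (2 * smoothAbs τ s) := by
  have hr := smoothAbs_pos hτ s
  field_simp
  linarith [smoothAbs_sq τ s]

lemma abs_smoothAbs_sub_mul_inv_sub_sub_le {s τ : ℝ} (hs : 0 ≤ s) (hτ : 0 < τ) :
    |smoothAbs τ s - τ ^ 2 / 2 * (smoothAbs τ s)⁻¹ - s - τ / 4| ≤ τ / 4 := by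
  rw [smoothAbs_sub_mul_inv_sub hτ]
  have hr : 0 < smoothAbs τ s := smoothAbs_pos hτ s
  have hsr : 0 ≤ smoothAbs τ s - s := sub_nonneg.2 (le_smoothAbs_right τ s)
  have hrτ : smoothAbs τ s - s ≤ τ := sub_le_iff_le_add'.2 (smoothAbs_le_add hτ.le hs)
  have hsq : (smoothAbs τ s - s) ^ 2 ≤ τ * smoothAbs τ s := by
    rw [sq]
    exact mul_le_mul hrτ (sub_le_self _ hs) hsr hτ.le
  have hlower : 0 ≤ (smoothAbs τ s - s) ^ 2 / (2 * smoothAbs τ s) := by positivity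
  have hupper : (smoothAbs τ s - s) ^ 2 / (2 * smoothAbs τ s) ≤ τ / 2 := by
    rw [div_le_iff₀ (by positivity)]
    linarith
  rw [abs_le]
  constructor <;> linarith

lemma sq_le_four_mul_of_forall_le_div_add_mul {x p q : ℝ} (hx : 0 ≤ x) (hp : 0 ≤ p) (hq : 0 ≤ q)
    (h : ∀ t > 0, x ≤ p / t + q * t) : x ^ 2 ≤ 4 * p * q := by
  have hquad (t : ℝ) : 0 ≤ q * (t * t) + -x * t + p := by
    rcases le_or_gt t 0 with ht | ht
    · have hxt : 0 ≤ x * -t := mul_nonneg hx (neg_nonneg.2 ht)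
      nlinarith [mul_nonneg hq (mul_self_nonneg t)]
    · have hxt : x * t ≤ (p / t + q * t) * t := by gcongr; exact h t ht
      rw [add_mul, div_mul_cancel₀ _ ht.ne'] at hxt
      linarith
  have hdiscrim := discrim_le_zero hquad
  rw [discrim] at hdiscrim
  linarith

end Real

section CStarAlgebra

variable {A : Type*} [CStarAlgebra A]

lemma norm_cfc_smoothAbs_inv_le (a : A) {τ : ℝ} (hτ : 0 < τ) :
    ‖cfc (fun s => (smoothAbs τ s)⁻¹) a‖ ≤ τ⁻¹ := by
  refine norm_cfc_le (inv_nonneg.2 hτ.le) fun s _ => ?_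
  rw [norm_inv, Real.norm_of_nonneg (smoothAbs_pos hτ s).le]
  gcongr
  exact le_smoothAbs_left τ s

lemma cfc_smoothAbs_mul_cfc_inv {a : A} (ha : IsSelfAdjoint a) {τ : ℝ} (hτ : 0 < τ) :
    cfc (smoothAbs τ) a * cfc (fun s => (smoothAbs τ s)⁻¹) a = 1 := by
  have hne (s : ℝ) : smoothAbs τ s ≠ 0 := (smoothAbs_pos hτ s).ne'
  rw [← cfc_mul _ _ a (by fun_prop) (continuous_smoothAbs_inv hτ).continuousOn]
  simp only [mul_inv_cancel₀ (hne _)]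
  exact cfc_const_one ℝ a

lemma cfc_smoothAbs_sq {a : A} (ha : IsSelfAdjoint a) (τ : ℝ) :
    cfc (smoothAbs τ) a ^ 2 = a ^ 2 + algebraMap ℝ A (τ ^ 2) := by
  rw [← cfc_pow _ 2 a]
  simp only [smoothAbs_sq]
  rw [cfc_add_const _ _ a, cfc_pow_id a 2]

variable [PartialOrder A] [StarOrderedRing A]

lemma two_mul_mul_norm_le_of_algebraMap_le {a : A} {m : ℝ} (h : algebraMap ℝ A m ≤ a) (x : A) :
    2 * m * ‖x‖ ≤ ‖a * x + x * a‖ := by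
  set c := max ‖a‖ m
  have ha : IsSelfAdjoint a := by
    simpa using (IsSelfAdjoint.of_nonneg (sub_nonneg.2 h)).add (.algebraMap A (.all m))
  have hac : a ≤ algebraMap ℝ A c :=
    ha.le_algebraMap_norm_self.trans (algebraMap_mono A (le_max_left _ _))
  refine two_mul_mul_norm_le_of_norm_algebraMap_sub_le (c := c) ?_ x
  rw [CStarAlgebra.norm_le_iff_le_algebraMap _ (sub_nonneg.2 (le_max_right _ _))
    (sub_nonneg.2 hac), map_sub]
  gcongr

lemma norm_lie_cfc_smoothAbs_le {a : A} (ha : IsSelfAdjoint a) {τ : ℝ} (hτ : 0 < τ) (b : A) :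
    ‖⁅cfc (smoothAbs τ) a, b⁆‖ ≤ ‖⁅a ^ 2, b⁆‖ / (2 * τ) := by
  have hr : algebraMap ℝ A τ ≤ cfc (smoothAbs τ) a :=
    algebraMap_le_cfc _ τ a fun s _ => le_smoothAbs_left τ s
  have hlie : ⁅cfc (smoothAbs τ) a ^ 2, b⁆ = ⁅a ^ 2, b⁆ := by
    rw [cfc_smoothAbs_sq ha, Ring.lie_def, Ring.lie_def, add_mul, mul_add, Algebra.commutes,
      add_sub_add_right_eq_sub]
  rw [le_div_iff₀' (by positivity), ← hlie, ← mul_lie_self_add_lie_self_mul]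
  exact two_mul_mul_norm_le_of_algebraMap_le hr _

lemma norm_lie_cfc_smoothAbs_inv_le {a : A} (ha : IsSelfAdjoint a) {τ : ℝ} (hτ : 0 < τ) (b : A) :
    ‖⁅cfc (fun s => (smoothAbs τ s)⁻¹) a, b⁆‖ ≤ ‖⁅a ^ 2, b⁆‖ / (2 * τ ^ 3) := by
  set r := cfc (smoothAbs τ) a
  set y := cfc (fun s => (smoothAbs τ s)⁻¹) a
  have hry : r * y = 1 := cfc_smoothAbs_mul_cfc_inv ha hτ
  have hyr : y * r = 1 := (cfc_commute_cfc _ _ a).eq.trans hry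
  have hy : ‖y‖ ≤ τ⁻¹ := norm_cfc_smoothAbs_inv_le a hτ
  calc ‖⁅y, b⁆‖ = ‖y * ⁅r, b⁆ * y‖ := by
        rw [lie_eq_neg_mul_lie_mul_of_mul_eq_one hry hyr, norm_neg]
    _ ≤ ‖y‖ * ‖⁅r, b⁆‖ * ‖y‖ := norm_mul₃_le
    _ ≤ τ⁻¹ * (‖⁅a ^ 2, b⁆‖ / (2 * τ)) * τ⁻¹ := by
        gcongr
        exact norm_lie_cfc_smoothAbs_le ha hτ b
    _ = ‖⁅a ^ 2, b⁆‖ / (2 * τ ^ 3) := by field_simp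

lemma norm_cfc_smoothAbs_sub_smul_cfc_inv_sub_sub_le {a : A} (ha : 0 ≤ a) {τ : ℝ} (hτ : 0 < τ) :
    ‖cfc (smoothAbs τ) a - (τ ^ 2 / 2) • cfc (fun s => (smoothAbs τ s)⁻¹) a - a
      - algebraMap ℝ A (τ / 4)‖ ≤ τ / 4 := by
  have hinv : ContinuousOn (fun s => (smoothAbs τ s)⁻¹) (spectrum ℝ a) :=
    (continuous_smoothAbs_inv hτ).continuousOn
  have hcfc : cfc (smoothAbs τ) a - (τ ^ 2 / 2) • cfc (fun s => (smoothAbs τ s)⁻¹) a - a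
      - algebraMap ℝ A (τ / 4) =
      cfc (fun s => smoothAbs τ s - τ ^ 2 / 2 * (smoothAbs τ s)⁻¹ - s - τ / 4) a := by
    rw [cfc_sub _ _ a, cfc_sub _ _ a, cfc_sub _ _ a (hg := hinv.const_mul _),
      cfc_const_mul _ _ a hinv, cfc_id' ℝ a, cfc_const _ a]
  rw [hcfc]
  refine norm_cfc_le (by positivity) fun s hs => ?_
  exact abs_smoothAbs_sub_mul_inv_sub_sub_le (spectrum_nonneg_of_nonneg ha hs) hτ

lemma norm_lie_le_div_add_mul {a : A} (ha : 0 ≤ a) (b : A) {τ : ℝ} (hτ : 0 < τ) :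
    ‖⁅a, b⁆‖ ≤ 3 / 4 * ‖⁅a ^ 2, b⁆‖ / τ + 1 / 2 * ‖b‖ * τ := by
  set r := cfc (smoothAbs τ) a
  set y := cfc (fun s => (smoothAbs τ s)⁻¹) a
  set e := r - (τ ^ 2 / 2) • y - a with he
  have hlie : ⁅a, b⁆ = ⁅r, b⁆ - (τ ^ 2 / 2) • ⁅y, b⁆ - ⁅e, b⁆ := by
    simp only [he, Ring.lie_def, sub_mul, mul_sub, smul_mul_assoc, mul_smul_comm, smul_sub]
    abel
  have hr : ‖⁅r, b⁆‖ ≤ ‖⁅a ^ 2, b⁆‖ / (2 * τ) := norm_lie_cfc_smoothAbs_le (.of_nonneg ha) hτ b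
  have hy : ‖⁅y, b⁆‖ ≤ ‖⁅a ^ 2, b⁆‖ / (2 * τ ^ 3) :=
    norm_lie_cfc_smoothAbs_inv_le (.of_nonneg ha) hτ b
  have hosc : ‖e - algebraMap ℝ A (τ / 4)‖ ≤ τ / 4 :=
    norm_cfc_smoothAbs_sub_smul_cfc_inv_sub_sub_le ha hτ
  calc ‖⁅a, b⁆‖ ≤ ‖⁅r, b⁆‖ + ‖(τ ^ 2 / 2) • ⁅y, b⁆‖ + ‖⁅e, b⁆‖ :=
        hlie ▸ (norm_sub_le _ _).trans (by gcongr; exact norm_sub_le _ _)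
    _ = ‖⁅r, b⁆‖ + τ ^ 2 / 2 * ‖⁅y, b⁆‖ + ‖⁅e, b⁆‖ := by
        rw [norm_smul, Real.norm_of_nonneg (by positivity)]
    _ ≤ ‖⁅a ^ 2, b⁆‖ / (2 * τ) + τ ^ 2 / 2 * (‖⁅a ^ 2, b⁆‖ / (2 * τ ^ 3))
        + 2 * (τ / 4) * ‖b‖ := by
        gcongr
        exact (norm_lie_le_two_mul_norm_sub_algebraMap_mul e b (τ / 4)).trans (by gcongr)
    _ = 3 / 4 * ‖⁅a ^ 2, b⁆‖ / τ + 1 / 2 * ‖b‖ * τ := by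
        field_simp
        ring

theorem sq_norm_lie_le {a : A} (ha : 0 ≤ a) (b : A) :
    ‖⁅a, b⁆‖ ^ 2 ≤ 3 / 2 * ‖b‖ * ‖⁅a ^ 2, b⁆‖ := by
  refine (sq_le_four_mul_of_forall_le_div_add_mul (norm_nonneg _) (by positivity) (by positivity)
    fun τ hτ => norm_lie_le_div_add_mul ha b hτ).trans_eq ?_
  ring

lemma commute_of_commute_sq {a b : A} (ha : 0 ≤ a) (h : Commute (a ^ 2) b) : Commute a b := by
  have hsq := sq_norm_lie_le ha b
  rw [h.lie_eq, norm_zero, mul_zero] at hsq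
  rw [commute_iff_lie_eq, ← norm_eq_zero]
  exact pow_eq_zero_iff two_ne_zero |>.1 (le_antisymm hsq (sq_nonneg _))

theorem norm_lie_mul_isStarProjection_le {a p : A} (ha : 0 ≤ a) (hp : IsStarProjection p)
    (hap : Commute a p) (b : A) :
    ‖⁅a, b⁆ * p‖ ≤ √(3 / 2) * √‖b‖ * √‖⁅a ^ 2, b⁆ * p‖ := by
  rw [← Real.sqrt_mul (by positivity), ← Real.sqrt_mul (by positivity)]
  refine Real.le_sqrt_of_sq_le ?_
  rw [← lie_mul_of_commute hap, ← lie_mul_of_commute (hap.pow_left 2)]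
  refine (sq_norm_lie_le ha (b * p)).trans ?_
  gcongr
  exact (norm_mul_le _ _).trans (mul_le_of_le_one_right (norm_nonneg _) hp.norm_le)

end CStarAlgebra

lemma mul_eq_self_of_hasSum {R E ι : Type*} [Semiring R] [TopologicalSpace E] [T2Space E]
    [AddCommMonoid E] [Module R E] {P : ι → E →L[R] E} (htotal : ∀ x, HasSum (fun i => P i x) x)
    {Y : E →L[R] E} {j : ι} (h : ∀ i, i ≠ j → P i * Y = 0) : P j * Y = Y := by
  ext x
  have hsingle : HasSum (fun i => P i (Y x)) (P j (Y x)) :=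
    hasSum_single j fun i hi => DFunLike.congr_fun (h i hi) x
  exact hsingle.unique (htotal (Y x))

lemma commute_of_blockDiagonal {𝕜 E ι : Type*} [RCLike 𝕜] [NormedAddCommGroup E]
    [InnerProductSpace 𝕜 E] [CompleteSpace E] {P : ι → E →L[𝕜] E}
    (hsa : ∀ i, IsSelfAdjoint (P i)) (htotal : ∀ x, HasSum (fun i => P i x) x)
    {T : E →L[𝕜] E} (hT : IsSelfAdjoint T)
    (hdiag : ∀ i j, i ≠ j → P i * (T * P j) = 0) (i : ι) : Commute T (P i) := by
  have hTP : P i * (T * P i) = T * P i := mul_eq_self_of_hasSum htotal fun j hj => hdiag j i hj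
  refine (hT.commute_iff (hsa i)).2 ?_
  rw [← hTP, ← mul_assoc]
  exact hT.conjugate_self (hsa i)

theorem commutator_sqrt_summable_general {ι : Type*} (P : ι → H →L[ℂ] H)
    (hP : ∀ i, IsStarProjection (P i)) (htotal : ∀ x, HasSum (fun i => P i x) x)
    (T V : H →L[ℂ] H) (hTdiag : ∀ i j, i ≠ j → P i * (T * P j) = 0)
    (hsum : Summable fun i => √‖⁅T, V⁆ * P i‖) (S : H →L[ℂ] H) (hS : 0 ≤ S) (hST : S ^ 2 = T) :
    (∀ i j, P i * (V * P j) = 0 → P i * (⁅S, V⁆ * P j) = 0) ∧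
    (Summable fun i => ‖⁅S, V⁆ * P i‖) ∧
    (∀ i, ‖⁅S, V⁆ * P i‖ ≤ √(3 / 2) * √‖V‖ * √‖⁅T, V⁆ * P i‖) := by
  subst hST
  have hSP (i : ι) : Commute S (P i) := commute_of_commute_sq hS <|
    commute_of_blockDiagonal (fun j => (hP j).isSelfAdjoint) htotal
      ((IsSelfAdjoint.of_nonneg hS).pow 2) hTdiag i
  have hbound (i : ι) : ‖⁅S, V⁆ * P i‖ ≤ √(3 / 2) * √‖V‖ * √‖⁅S ^ 2, V⁆ * P i‖ :=
    norm_lie_mul_isStarProjection_le hS (hP i) (hSP i) V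
  exact ⟨fun i j => mul_lie_mul_eq_zero (hSP j) (hSP i),
    .of_nonneg_of_le (fun _ => norm_nonneg _) hbound (hsum.mul_left _), hbound⟩

/-- Let `T` be a positive block-diagonal operator and `V` a `1`-raising operator on
`H = ⊕ₙ Hₙ`. If `Σₙ ‖[T,V]|_{Hₙ}‖^{1/2} < ∞`, then `[T^{1/2}, V]` is a summable `1`-raising
operator; in particular `‖[T^{1/2},V]|_{Hₙ}‖ ≤ (5/4) ‖V‖^{1/2} ‖[T,V]|_{Hₙ}‖^{1/2}` for each
`n`. Here the positive square root `T^{1/2}` is represented by any positive operator `S`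
with `S * S = T`. -/
theorem commutator_sqrt_summable (P : ℕ → H →L[ℂ] H)
    (hsa : ∀ n, IsSelfAdjoint (P n)) (hidem : ∀ n, P n * P n = P n)
    (horth : ∀ m n, m ≠ n → P m * P n = 0)
    (htotal : ∀ x : H, HasSum (fun n => P n x) x)
    (T V : H →L[ℂ] H) (hT : T.IsPositive)
    (hTdiag : ∀ m n : ℕ, m ≠ n → (P m).comp (T.comp (P n)) = 0)
    (hV : ∀ m n : ℕ, m ≠ n + 1 → (P m).comp (V.comp (P n)) = 0)
    (hsum : Summable fun n => Real.sqrt ‖((T * V - V * T).comp (P n) : H →L[ℂ] H)‖)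
    (S : H →L[ℂ] H) (hS : S.IsPositive) (hST : S * S = T) :
    (∀ m n : ℕ, m ≠ n + 1 → (P m).comp ((S * V - V * S).comp (P n)) = 0) ∧
    (Summable fun n => ‖((S * V - V * S).comp (P n) : H →L[ℂ] H)‖) ∧
    (∀ n, ‖((S * V - V * S).comp (P n) : H →L[ℂ] H)‖ ≤
      (5 / 4 : ℝ) * Real.sqrt ‖V‖ * Real.sqrt ‖((T * V - V * T).comp (P n) : H →L[ℂ] H)‖) := by
  obtain ⟨hraising, hsummable, hbound⟩ := commutator_sqrt_summable_general P
    (fun n => ⟨hidem n, hsa n⟩) htotal T V hTdiag hsum S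
    ((ContinuousLinearMap.nonneg_iff_isPositive S).2 hS) ((sq S).trans hST)
  refine ⟨fun m n hmn => hraising m n (hV m n hmn), hsummable, fun n => (hbound n).trans ?_⟩
  have hconst : √(3 / 2) ≤ 5 / 4 := Real.sqrt_le_iff.2 (by norm_num)
  exact mul_le_mul_of_nonneg_right (by gcongr) (Real.sqrt_nonneg _)
end
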